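/- Soundness of limited belief with respect to classical semantics: for every set of clauses s, every objective formula α, and every natural number k, if s ⊨ˢ B_k α then s ⊨ α (classical entailment). -/

import Mathlib

/-! ## Limited belief: basic syntax and semantics (Schwering 2017, quantifier-free). -/

/-- Standard names (a countably infinite supply). -/
abbrev Name := ℕ

/-- Function terms `f(n₁,…,n_j)`: a function symbol applied to standard names. -/
structure FnTerm where
  sym : ℕ
  args : List Name
deriving DecidableEq, Inhabited

/-- Literals `t ≈ n` (pos) and `t ≉ n` (neg). -/
inductive Lit where
  | pos (t : FnTerm) (n : Name)
  | neg (t : FnTerm) (n : Name)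
deriving DecidableEq

instance : Inhabited Lit := ⟨.pos default 0⟩

/-- The left-hand side (function term) of a literal. -/
def Lit.lhs : Lit → FnTerm
  | .pos t _ => t
  | .neg t _ => t

/-- The right-hand side (standard name) of a literal. -/
def Lit.rhs : Lit → Name
  | .pos _ n => n
  | .neg _ n => n

/-- The negation `¬ℓ` of a literal. -/
def Lit.negate : Lit → Lit
  | .pos t n => .neg t n
  | .neg t n => .pos t n

/-- Names occurring in a literal. -/
def Lit.names (ℓ : Lit) : Finset Name := insert ℓ.rhs ℓ.lhs.args.toFinset

/-- Two literals are complementary iff they are of the form `t ≈ n` and `t ≉ n`,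
or of the form `t ≈ n` and `t ≈ n'` for distinct `n, n'`. -/
def Lit.complementary : Lit → Lit → Bool
  | .pos t n, .neg t' n' => t == t' && n == n'
  | .neg t n, .pos t' n' => t == t' && n == n'
  | .pos t n, .pos t' n' => t == t' && n != n'
  | .neg _ _, .neg _ _ => false

/-- A clause is a (finite) set of literals. -/
abbrev Clause := Finset Lit

/-- Unit propagation of clause `c` with literal `ℓ`: remove from `c` all
literals complementary to `ℓ`. -/
def Clause.prop (c : Clause) (ℓ : Lit) : Clause :=
  c.filter (fun ℓ' => Lit.complementary ℓ' ℓ = false)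

/-- `c₁` subsumes `c₂` iff for every `t ≈ n ∈ c₁`, `t ≈ n ∈ c₂` or `t ≉ n' ∈ c₂`
for some `n' ≠ n`, and for every `t ≉ n ∈ c₁`, `t ≉ n ∈ c₂`. -/
def Clause.subsumes (c₁ c₂ : Clause) : Prop :=
  (∀ t n, Lit.pos t n ∈ c₁ → Lit.pos t n ∈ c₂ ∨ ∃ n', n' ≠ n ∧ Lit.neg t n' ∈ c₂) ∧
  (∀ t n, Lit.neg t n ∈ c₁ → Lit.neg t n ∈ c₂)

/-- `UP s`: the closure of the set of clauses `s` under unit propagation and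
subsumption.  `UP s c` means `c ∈ UP(s)`. -/
inductive UP (s : Set Clause) : Clause → Prop
  | mem {c : Clause} : c ∈ s → UP s c
  | unit {c : Clause} {ℓ : Lit} : UP s {ℓ} → UP s c → UP s (c.prop ℓ)
  | sub {c₁ c₂ : Clause} : UP s c₁ → c₁.subsumes c₂ → UP s c₂

/-- Objective formulas: literals (`atom` is `t ≈ n`, `not atom` is `t ≉ n`),
negation and disjunction. -/
inductive Form where
  | atom (t : FnTerm) (n : Name)
  | not (φ : Form)
  | or (φ ψ : Form)
deriving DecidableEq

/-- `α ∧ β` abbreviates `¬(¬α ∨ ¬β)`. -/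
def Form.and (φ ψ : Form) : Form := .not (.or (.not φ) (.not ψ))

/-- `α → β` abbreviates `¬α ∨ β`. -/
def Form.imp (φ ψ : Form) : Form := .or (.not φ) ψ

/-- A formula is (syntactically) a clause iff it is a disjunction of literals. -/
def Form.isClause : Form → Bool
  | .atom _ _ => true
  | .not (.atom _ _) => true
  | .not _ => false
  | .or φ ψ => φ.isClause && ψ.isClause

/-- The set of literals of a clause-formula. -/
def Form.lits : Form → Clause
  | .atom t n => {Lit.pos t n}
  | .not (.atom t n) => {Lit.neg t n}
  | .not _ => ∅
  | .or φ ψ => φ.lits ∪ ψ.lits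

/-- The limited-belief truth relation `s ⊨ˢ α` for objective formulas:
a clause is true iff it is in `UP(s)`; a non-clause disjunction is true iff one
of its disjuncts is; `¬(α ∨ β)` is true iff `¬α` and `¬β` are; `¬¬α` is true
iff `α` is. -/
def sat (s : Set Clause) : Form → Prop
  | .atom t n => UP s {Lit.pos t n}
  | .not (.atom t n) => UP s {Lit.neg t n}
  | .not (.not φ) => sat s φ
  | .not (.or φ ψ) => sat s (.not φ) ∧ sat s (.not ψ)
  | .or φ ψ => if (Form.or φ ψ).isClause then UP s (Form.or φ ψ).lits
               else sat s φ ∨ sat s ψ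

/-- `satB s k α` is `s ⊨ˢ B_k α`: `B₀ α` holds iff `α` does, and `B_{k+1} α`
holds iff for some function term `t`, for all names `n`,
`s ∪ {t ≈ n} ⊨ˢ B_k α`. -/
def satB (s : Set Clause) : ℕ → Form → Prop
  | 0, φ => sat s φ
  | k+1, φ => ∃ t : FnTerm, ∀ n : Name, satB (s ∪ {({Lit.pos t n} : Clause)}) k φ

/-- A world maps function terms to standard names. -/
abbrev World := FnTerm → Name

/-- Classical truth of a literal in a world. -/
def Lit.holds (w : World) : Lit → Prop
  | .pos t n => w t = n
  | .neg t n => w t ≠ n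

/-- Classical truth of a clause in a world. -/
def Clause.holds (w : World) (c : Clause) : Prop := ∃ ℓ ∈ c, ℓ.holds w

/-- Classical truth of an objective formula in a world. -/
def wsat (w : World) : Form → Prop
  | .atom t n => w t = n
  | .not φ => ¬ wsat w φ
  | .or φ ψ => wsat w φ ∨ wsat w ψ

/-- Classical entailment `s ⊨ α`. -/
def entails (s : Set Clause) (φ : Form) : Prop :=
  ∀ w : World, (∀ c ∈ s, c.holds w) → wsat w φ

/-- Classical entailment of a clause (disjunction of its literals). -/
def entailsClause (s : Set Clause) (c : Clause) : Prop :=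
  ∀ w : World, (∀ c' ∈ s, c'.holds w) → c.holds w

/-- Function terms mentioned in a formula. -/
def Form.terms : Form → Finset FnTerm
  | .atom t _ => {t}
  | .not φ => φ.terms
  | .or φ ψ => φ.terms ∪ ψ.terms

/-- Standard names mentioned in a formula. -/
def Form.names : Form → Finset Name
  | .atom t n => insert n t.args.toFinset
  | .not φ => φ.names
  | .or φ ψ => φ.names ∪ ψ.names

/-!
Every world satisfying `s` satisfies every clause of `UP s`, because two literals true in the same
world are never complementary. Splitting on a term `t` loses no world: a world `w` satisfying `s`
also satisfies `s ∪ {t ≈ w t}`.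
-/

theorem Lit.complementary_eq_false_of_holds {w : World} {ℓ ℓ' : Lit} (h : ℓ.holds w)
    (h' : ℓ'.holds w) : ℓ.complementary ℓ' = false := by
  rw [Bool.eq_false_iff]
  intro hcompl
  rcases ℓ with ⟨t, n⟩ | ⟨t, n⟩ <;> rcases ℓ' with ⟨t', n'⟩ | ⟨t', n'⟩ <;>
    simp only [Lit.complementary, Bool.and_eq_true, beq_iff_eq, bne_iff_ne, Bool.false_eq_true]
      at hcompl <;>
    obtain ⟨rfl, hn⟩ := hcompl
  · exact hn (h.symm.trans h')
  · exact h' (h.trans hn)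
  · exact h (h'.trans hn.symm)

namespace Clause

theorem holds_singleton {w : World} {ℓ : Lit} : Clause.holds w {ℓ} ↔ ℓ.holds w := by
  simp only [Clause.holds, Finset.mem_singleton, exists_eq_left]

theorem holds_union {w : World} {c₁ c₂ : Clause} :
    Clause.holds w (c₁ ∪ c₂) ↔ c₁.holds w ∨ c₂.holds w := by
  simp only [Clause.holds, Finset.mem_union, or_and_right, exists_or]

theorem not_holds_empty {w : World} : ¬ Clause.holds w ∅ := by
  simp only [Clause.holds, Finset.notMem_empty, false_and, exists_false, not_false_eq_true]

theorem holds.prop {w : World} {c : Clause} {ℓ : Lit} (hc : c.holds w) (hℓ : ℓ.holds w) :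
    (c.prop ℓ).holds w := by
  obtain ⟨m, hmc, hm⟩ := hc
  exact ⟨m, Finset.mem_filter.2 ⟨hmc, Lit.complementary_eq_false_of_holds hm hℓ⟩, hm⟩

theorem subsumes.holds {w : World} {c₁ c₂ : Clause} (hsub : c₁.subsumes c₂) (h : c₁.holds w) :
    c₂.holds w := by
  obtain ⟨hpos, hneg⟩ := hsub
  obtain ⟨⟨t, n⟩ | ⟨t, n⟩, hmem, hw⟩ := h
  · obtain hmem' | ⟨n', hne, hmem'⟩ := hpos t n hmem
    · exact ⟨.pos t n, hmem', hw⟩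
    · have hw' : w t ≠ n' := fun heq ↦ hne (heq.symm.trans hw)
      exact ⟨.neg t n', hmem', hw'⟩
  · exact ⟨.neg t n, hneg t n hmem, hw⟩

end Clause

theorem UP.entailsClause {s : Set Clause} {c : Clause} (h : UP s c) : entailsClause s c := by
  intro w hs
  induction h with
  | mem hc => exact hs _ hc
  | unit _ _ ihℓ ihc => exact ihc.prop (Clause.holds_singleton.1 ihℓ)
  | sub _ hsub ih => exact hsub.holds ih

theorem Form.wsat_of_holds_lits {w : World} (φ : Form) (h : φ.lits.holds w) : wsat w φ := by
  fun_induction Form.lits φ with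
  | case1 t n => exact Clause.holds_singleton.1 h
  | case2 t n => exact Clause.holds_singleton.1 h
  | case3 φ => exact absurd h Clause.not_holds_empty
  | case4 φ ψ ihφ ihψ => exact (Clause.holds_union.1 h).imp ihφ ihψ

theorem UP.entails_of_lits {s : Set Clause} {φ : Form} (h : UP s φ.lits) : entails s φ :=
  fun w hs ↦ φ.wsat_of_holds_lits (h.entailsClause w hs)

theorem sat.entails {s : Set Clause} {φ : Form} (h : sat s φ) : entails s φ := by
  intro w hs
  fun_induction sat s φ with
  | case1 t n => exact UP.entails_of_lits (φ := .atom t n) h w hs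
  | case2 t n => exact UP.entails_of_lits (φ := .not (.atom t n)) h w hs
  | case3 φ ih => exact not_not.2 (ih h)
  | case4 φ ψ ihφ ihψ => exact not_or.2 ⟨ihφ h.1, ihψ h.2⟩
  | case5 φ ψ _ => exact UP.entails_of_lits h w hs
  | case6 φ ψ _ ihφ ihψ => exact h.imp ihφ ihψ

theorem entails_of_forall_name {s : Set Clause} {φ : Form} (t : FnTerm)
    (h : ∀ n, entails (s ∪ {({Lit.pos t n} : Clause)}) φ) : entails s φ := by
  intro w hs
  refine h (w t) w ?_
  rintro c (hc | rfl)
  · exact hs c hc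
  · exact Clause.holds_singleton.2 rfl

/-- **Soundness of limited belief** w.r.t. classical semantics: if
`s ⊨ˢ B_k α` then `s ⊨ α`. -/
theorem limited_belief_sound (s : Set Clause) (α : Form) (k : ℕ)
    (h : satB s k α) : entails s α := by
  induction k generalizing s with
  | zero => exact sat.entails h
  | succ k ih =>
    obtain ⟨t, ht⟩ := h
    exact entails_of_forall_name t fun n ↦ ih _ (ht n)
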